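/- arXiv:2109.07347 — 4 statements merged into one kernel-verified Lean document; each statement's English description precedes it below -/
import Mathlib

section
/- Let k ≥ 1, δ ≥ 2, n ≥ (δ² + kδ + 7δ + 6k + 9)(δ² + kδ + 1), and let G ∈ 𝓑₂(n,k,δ) be a graph attaining the maximum Q-index among all graphs in 𝓑₂(n,k,δ), and, subject to that, such that the induced subgraph G[Y] has the largest number of edges. Let h be a positive eigenvector of Q(G) for q(G) with maximum entry 1. Set Y₂ = {i ∈ Y : d_G(i) ≤ n−2} and Z₁ = {i ∈ Z : d_G(i) = n−δ−k−1}. If Y₂ ≠ ∅, then h_i > h_j for all i ∈ Z₁ and all j ∈ Y₂. -/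
open Finset Matrix

/-- The signless Laplacian matrix `Q(G) = D(G) + A(G)` of a graph. -/
noncomputable def signlessLaplacian {V : Type*} [Fintype V] [DecidableEq V]
    (G : SimpleGraph V) [DecidableRel G.Adj] : Matrix V V ℝ :=
  Matrix.diagonal (fun v => (G.degree v : ℝ)) + G.adjMatrix ℝ

/-- The Q-index (largest eigenvalue of the signless Laplacian). -/
noncomputable def qIndex {V : Type*} [Fintype V] [DecidableEq V]
    (G : SimpleGraph V) [DecidableRel G.Adj] : ℝ :=
  sSup {μ : ℝ | ∃ x : V → ℝ, x ≠ 0 ∧ signlessLaplacian G *ᵥ x = μ • x}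

/-- The adjacency spectral radius (largest eigenvalue of the adjacency matrix). -/
noncomputable def adjSpecRad {V : Type*} [Fintype V] [DecidableEq V]
    (G : SimpleGraph V) [DecidableRel G.Adj] : ℝ :=
  sSup {μ : ℝ | ∃ x : V → ℝ, x ≠ 0 ∧ G.adjMatrix ℝ *ᵥ x = μ • x}

/-- A graph is `k`-path-coverable if its vertex set can be covered by at most `k`
vertex-disjoint paths. -/
def PathCoverable {V : Type*} (G : SimpleGraph V) (k : ℕ) : Prop :=
  ∃ (m : ℕ) (P : Fin m → Σ (u : V) (v : V), G.Walk u v),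
    m ≤ k ∧
    (∀ i, (P i).2.2.IsPath) ∧
    (∀ v : V, ∃ i, v ∈ (P i).2.2.support) ∧
    (∀ i j, i ≠ j → ∀ v, v ∈ (P i).2.2.support → v ∉ (P j).2.2.support)

/-- A graph is traceable if it has a Hamilton path. -/
def Traceable {V : Type*} (G : SimpleGraph V) : Prop :=
  ∃ (u v : V) (p : G.Walk u v), p.IsPath ∧ ∀ w, w ∈ p.support

/-- `B(n,k,δ) = K_δ ∨ (K_{n-2δ-k} ∪ complement K_{δ+k})`: the first `δ` vertices form the
dominating clique `Y`, the next `n-2δ-k` vertices form the clique `Z`, and the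
last `δ+k` vertices form the independent set `X`. -/
def Bgraph (n k δ : ℕ) : SimpleGraph (Fin n) where
  Adj i j := i ≠ j ∧ ((i : ℕ) < δ ∨ (j : ℕ) < δ ∨
      ((i : ℕ) < n - (δ + k) ∧ (j : ℕ) < n - (δ + k)))
  symm := by
    constructor
    rintro i j ⟨hne, h⟩
    exact ⟨hne.symm, by tauto⟩
  loopless := by
    constructor
    rintro i ⟨h, -⟩
    exact h rfl

instance (n k δ : ℕ) : DecidableRel (Bgraph n k δ).Adj := fun i j =>
  inferInstanceAs (Decidable (i ≠ j ∧ ((i : ℕ) < δ ∨ (j : ℕ) < δ ∨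
      ((i : ℕ) < n - (δ + k) ∧ (j : ℕ) < n - (δ + k)))))

instance {n : ℕ} (G : SimpleGraph (Fin n)) [DecidableRel G.Adj]
    (E' : Finset (Sym2 (Fin n))) : DecidableRel (G.deleteEdges ↑E').Adj := fun a b =>
  decidable_of_iff (G.Adj a b ∧ s(a, b) ∉ E') (by simp)

/-- The edge set `E₁` of `B(n,k,δ)`: edges with both endpoints in `Y ∪ Z`. -/
def IsE1Edge (n k δ : ℕ) (e : Sym2 (Fin n)) : Prop :=
  e ∈ (Bgraph n k δ).edgeSet ∧ ∀ v ∈ e, (v : ℕ) < n - (δ + k)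

/-- The family `𝓑₁(n,k,δ)`, up to isomorphism. -/
def InB1 (n k δ : ℕ) (G : SimpleGraph (Fin n)) : Prop :=
  ∃ E' : Finset (Sym2 (Fin n)),
    (∀ e ∈ E', IsE1Edge n k δ e) ∧ E'.card ≤ δ * (δ + k) / 4 ∧
    Nonempty (G ≃g (Bgraph n k δ).deleteEdges ↑E')

/-- The family `𝓑₂(n,k,δ)`, up to isomorphism. -/
def InB2 (n k δ : ℕ) (G : SimpleGraph (Fin n)) : Prop :=
  ∃ E' : Finset (Sym2 (Fin n)),
    (∀ e ∈ E', IsE1Edge n k δ e) ∧ E'.card = δ * (δ + k) / 4 + 1 ∧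
    Nonempty (G ≃g (Bgraph n k δ).deleteEdges ↑E')
/-- The number of edges of the subgraph of `G` induced by `Y` (the first `δ` vertices). -/
def inducedYEdges (n δ : ℕ) (G : SimpleGraph (Fin n)) [DecidableRel G.Adj] : ℕ :=
  (G.edgeFinset.filter (fun e => ∀ v : Fin n, v ∈ e → (v : ℕ) < δ)).card


lemma signlessLaplacian_mulVec_apply {V : Type*} [Fintype V] [DecidableEq V]
    (G : SimpleGraph V) [DecidableRel G.Adj] (x : V → ℝ) (v : V) :
    (signlessLaplacian G *ᵥ x) v = ∑ w, (if G.Adj v w then x v + x w else 0) := by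
  have h1 : ∀ w, (if G.Adj v w then x v + x w else 0)
      = (if G.Adj v w then x v else 0) + (if G.Adj v w then x w else 0) := by
    intro w; split_ifs <;> simp
  simp only [h1, Finset.sum_add_distrib]
  unfold signlessLaplacian
  rw [Matrix.add_mulVec, Pi.add_apply, Matrix.mulVec_diagonal,
    SimpleGraph.adjMatrix_mulVec_apply]
  congr 1
  · rw [← Finset.sum_filter, Finset.sum_const, nsmul_eq_mul,
      ← SimpleGraph.card_neighborFinset_eq_degree, SimpleGraph.neighborFinset_eq_filter]
  · rw [← Finset.sum_filter, SimpleGraph.neighborFinset_eq_filter]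

lemma signlessLaplacian_isHermitian {V : Type*} [Fintype V] [DecidableEq V]
    (G : SimpleGraph V) [DecidableRel G.Adj] : (signlessLaplacian G).IsHermitian := by
  unfold signlessLaplacian
  apply Matrix.IsHermitian.add
  · exact Matrix.isHermitian_diagonal _
  · rw [Matrix.IsHermitian, Matrix.conjTranspose_eq_transpose_of_trivial]
    exact G.transpose_adjMatrix

lemma eigenSet_bddAbove {V : Type*} [Fintype V] [DecidableEq V] (A : Matrix V V ℝ) :
    BddAbove {μ : ℝ | ∃ x : V → ℝ, x ≠ 0 ∧ A *ᵥ x = μ • x} := by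
  apply Set.Finite.bddAbove
  apply (Module.End.finite_hasEigenvalue (Matrix.toLin' A)).subset
  rintro μ ⟨x, hx, hA⟩
  exact Module.End.hasEigenvalue_of_hasEigenvector (x := x)
    ⟨Module.End.mem_eigenspace_iff.2 (by simpa using hA), hx⟩

/-- If the Rayleigh quotient of `x` is at least `q` and `q(G) ≤ q`, then `x` is a
`q`-eigenvector. -/
lemma eig_of_rayleigh {V : Type*} [Fintype V] [DecidableEq V]
    (G : SimpleGraph V) [DecidableRel G.Adj] (q : ℝ) (hq : qIndex G ≤ q) (x : V → ℝ)
    (hx : q * (x ⬝ᵥ x) ≤ x ⬝ᵥ (signlessLaplacian G *ᵥ x)) :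
    signlessLaplacian G *ᵥ x = q • x := by
  have hA := signlessLaplacian_isHermitian G
  have hM : (q • (1 : Matrix V V ℝ) - signlessLaplacian G).IsHermitian := by
    apply Matrix.IsHermitian.sub _ hA
    rw [Matrix.IsHermitian]; simp
  have hmul : ∀ y, (q • (1 : Matrix V V ℝ) - signlessLaplacian G) *ᵥ y
      = q • y - signlessLaplacian G *ᵥ y := by
    intro y; rw [Matrix.sub_mulVec, Matrix.smul_mulVec, Matrix.one_mulVec]
  have hP : (q • (1 : Matrix V V ℝ) - signlessLaplacian G).PosSemidef := by
    rw [hM.posSemidef_iff_eigenvalues_nonneg]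
    intro t
    have he := hM.mulVec_eigenvectorBasis t
    rw [hmul] at he
    have hmem : q - hM.eigenvalues t ≤ qIndex G := by
      apply le_csSup (eigenSet_bddAbove _)
      refine ⟨⇑(hM.eigenvectorBasis t), ?_, ?_⟩
      · intro h0
        apply hM.eigenvectorBasis.orthonormal.ne_zero t
        ext v; exact congrFun h0 v
      · rw [sub_smul, ← he]; abel
    simp only [Pi.zero_apply]
    linarith
  have h0 : x ⬝ᵥ ((q • (1 : Matrix V V ℝ) - signlessLaplacian G) *ᵥ x) = 0 := by
    apply le_antisymm
    · rw [hmul, dotProduct_sub, dotProduct_smul, smul_eq_mul]; linarith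
    · simpa using hP.dotProduct_mulVec_nonneg x
  have := (hP.dotProduct_mulVec_zero_iff x).1 (by simpa using h0)
  rw [hmul, sub_eq_zero] at this
  exact this.symm

lemma sum_edge {V : Type*} [Fintype V] [DecidableEq V] (x : V → ℝ) (a b v : V) (hab : a ≠ b) :
    (∑ w, (if s(v, w) = s(a, b) then x v + x w else 0))
      = (if v = a then x a + x b else 0) + (if v = b then x a + x b else 0) := by
  by_cases h1 : v = a
  · subst h1
    have : ∀ w, s(v, w) = s(v, b) ↔ w = b := by intro w; simp [hab]
    simp only [this]
    simp [hab]
  · by_cases h2 : v = b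
    · subst h2
      have : ∀ w, s(v, w) = s(a, v) ↔ w = a := by
        intro w; rw [Sym2.eq_swap (a := a)]; simp [h1]
      simp only [this]
      simp [h1, add_comm]
    · simp [h1, h2]

/-- Switching an edge `iw` to a non-edge `jw` with `x i ≤ x j` strictly increases the Q-index. -/
lemma switch_lt {V : Type*} [Fintype V] [DecidableEq V]
    (G G' : SimpleGraph V) [DecidableRel G.Adj] [DecidableRel G'.Adj] (x : V → ℝ)
    (hpos : ∀ v, 0 < x v) (q : ℝ) (heig : signlessLaplacian G *ᵥ x = q • x)
    (i j w : V) (hij : i ≠ j) (hiw : i ≠ w) (hjw : j ≠ w)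
    (hG1 : G.Adj i w) (hG2 : ¬ G.Adj j w)
    (hadj : ∀ a b, G'.Adj a b ↔ (s(a, b) = s(j, w) ∨ (G.Adj a b ∧ s(a, b) ≠ s(i, w))))
    (hle : x i ≤ x j) : q < qIndex G' := by
  by_contra hcon
  push Not at hcon
  have hd : ∀ v, (signlessLaplacian G' *ᵥ x) v = (signlessLaplacian G *ᵥ x) v
      + ((if v = j then x j + x w else 0) + (if v = w then x j + x w else 0))
      - ((if v = i then x i + x w else 0) + (if v = w then x i + x w else 0)) := by
    intro v
    rw [signlessLaplacian_mulVec_apply, signlessLaplacian_mulVec_apply,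
      ← sum_edge x j w v hjw, ← sum_edge x i w v hiw, ← Finset.sum_add_distrib,
      ← Finset.sum_sub_distrib]
    apply Finset.sum_congr rfl
    intro b _
    have hne : s(i, w) ≠ s(j, w) := by
      intro h; rw [Sym2.eq_swap, Sym2.eq_swap (a := j)] at h; simp at h; grind
    by_cases c1 : s(v, b) = s(j, w)
    · have c2 : s(v, b) ≠ s(i, w) := fun h => hne (h.symm.trans c1)
      have c3 : ¬ G.Adj v b := by
        rwa [← SimpleGraph.mem_edgeSet, c1, SimpleGraph.mem_edgeSet]
      have c4 : G'.Adj v b := (hadj v b).2 (Or.inl c1)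
      simp only [c1, c3, c4, hne.symm, if_true, if_false]; ring
    · by_cases c2 : s(v, b) = s(i, w)
      · have c3 : G.Adj v b := by
          rwa [← SimpleGraph.mem_edgeSet, c2, SimpleGraph.mem_edgeSet]
        have c4 : ¬ G'.Adj v b := by rw [hadj]; tauto
        simp only [c2, c3, c4, hne, if_true, if_false]; ring
      · have c4 : G'.Adj v b ↔ G.Adj v b := by rw [hadj]; tauto
        simp only [c1, c2, c4, if_false]; ring
  have hray : q * (x ⬝ᵥ x) ≤ x ⬝ᵥ (signlessLaplacian G' *ᵥ x) := by
    have : x ⬝ᵥ (signlessLaplacian G' *ᵥ x) = q * (x ⬝ᵥ x)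
        + (x j - x i) * (x j + x i + 2 * x w) := by
      have e1 : x ⬝ᵥ (signlessLaplacian G *ᵥ x) = q * (x ⬝ᵥ x) := by
        rw [heig, dotProduct_smul, smul_eq_mul]
      rw [← e1]
      simp only [dotProduct, hd, mul_add, mul_sub, Finset.sum_add_distrib,
        Finset.sum_sub_distrib, mul_ite, mul_zero, Finset.sum_ite_eq', Finset.mem_univ, if_true]
      ring
    rw [this]
    have := mul_nonneg (sub_nonneg.2 hle)
      (by linarith [hpos i, hpos j, hpos w] : 0 ≤ x j + x i + 2 * x w)
    linarith
  have h1 := eig_of_rayleigh G' q hcon x hray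
  have h2 := hd j
  rw [h1, heig] at h2
  simp [hjw, hij.symm] at h2
  linarith [hpos j, hpos w]

/-- **Lemma 3.5 (1)**: let `G ∈ 𝓑₂(n,k,δ)` have the largest Q-index in the family and,
subject to that, the largest number of edges in `G[Y]`, and let `h` be a positive
`q(G)`-eigenvector with maximum entry `1`.  If `Y₂ ≠ ∅`, then `h i > h j` for all
`i ∈ Z₁` and `j ∈ Y₂`. -/
theorem eigenvector_Z1_gt_Y2 (k δ n : ℕ) (hk : 1 ≤ k) (hδ : 2 ≤ δ)
    (hn : (δ ^ 2 + k * δ + 7 * δ + 6 * k + 9) * (δ ^ 2 + k * δ + 1) ≤ n)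
    (E' : Finset (Sym2 (Fin n))) (hE : ∀ e ∈ E', IsE1Edge n k δ e)
    (hcard : E'.card = δ * (δ + k) / 4 + 1)
    (G : SimpleGraph (Fin n)) [DecidableRel G.Adj]
    (hG : G = (Bgraph n k δ).deleteEdges ↑E')
    (hmax : ∀ E'' : Finset (Sym2 (Fin n)), (∀ e ∈ E'', IsE1Edge n k δ e) →
        E''.card = δ * (δ + k) / 4 + 1 →
        qIndex ((Bgraph n k δ).deleteEdges ↑E'') ≤ qIndex G)
    (hmaxY : ∀ E'' : Finset (Sym2 (Fin n)), (∀ e ∈ E'', IsE1Edge n k δ e) →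
        E''.card = δ * (δ + k) / 4 + 1 →
        qIndex ((Bgraph n k δ).deleteEdges ↑E'') = qIndex G →
        inducedYEdges n δ ((Bgraph n k δ).deleteEdges ↑E'') ≤ inducedYEdges n δ G)
    (h : Fin n → ℝ) (hpos : ∀ v, 0 < h v)
    (heig : signlessLaplacian G *ᵥ h = qIndex G • h)
    (hnorm : (∀ v, h v ≤ 1) ∧ ∃ v, h v = 1)
    (hY2 : ∃ j : Fin n, (j : ℕ) < δ ∧ G.degree j ≤ n - 2) :
    ∀ i j : Fin n,
      δ ≤ (i : ℕ) → (i : ℕ) < n - (δ + k) → G.degree i = n - δ - k - 1 →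
      (j : ℕ) < δ → G.degree j ≤ n - 2 →
      h j < h i := by
  intro i j hi1 hi2 hdi hj hdj
  by_contra hcon
  push Not at hcon
  have hjn := j.isLt
  have hij : i ≠ j := by rintro rfl; omega
  have hGadj : ∀ a b, G.Adj a b ↔ ((Bgraph n k δ).Adj a b ∧ s(a, b) ∉ E') := by
    intro a b; rw [hG]; simp
  have hN : δ + k < n := by omega
  -- `i` is adjacent to all other vertices of `Y ∪ Z`
  have hZ : ∀ w : Fin n, (w : ℕ) < n - (δ + k) → i ≠ w → G.Adj i w := by
    have hsub : G.neighborFinset i ⊆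
        (Finset.univ.filter (fun w : Fin n => (w : ℕ) < n - (δ + k))).erase i := by
      intro w hw
      rw [SimpleGraph.mem_neighborFinset, hGadj] at hw
      obtain ⟨⟨hne, h'⟩, -⟩ := hw
      simp only [Finset.mem_erase, Finset.mem_filter, Finset.mem_univ, true_and]
      exact ⟨hne.symm, by omega⟩
    have hc : (Finset.univ.filter (fun w : Fin n => (w : ℕ) < n - (δ + k))).card
        = n - (δ + k) := by
      rw [Fin.card_filter_val_lt]; omega
    have heq := Finset.eq_of_subset_of_card_le hsub (by
      rw [Finset.card_erase_of_mem (by simpa using hi2), hc,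
        SimpleGraph.card_neighborFinset_eq_degree, hdi]; omega)
    intro w hw hne
    rw [← SimpleGraph.mem_neighborFinset, heq]
    simp [hw, hne.symm]
  -- `j` misses some vertex `w`
  obtain ⟨w, hjw, hnadj⟩ : ∃ w, j ≠ w ∧ ¬ G.Adj j w := by
    by_contra hall
    push Not at hall
    have hsub : Finset.univ.erase j ⊆ G.neighborFinset j := by
      intro w hw
      rw [SimpleGraph.mem_neighborFinset]
      exact hall w (Finset.ne_of_mem_erase hw).symm
    have := Finset.card_le_card hsub
    rw [Finset.card_erase_of_mem (Finset.mem_univ _), Finset.card_univ, Fintype.card_fin,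
      SimpleGraph.card_neighborFinset_eq_degree] at this
    omega
  have hmem : s(j, w) ∈ E' := by
    by_contra hn'
    exact hnadj ((hGadj j w).2 ⟨⟨hjw, Or.inl hj⟩, hn'⟩)
  have hw : (w : ℕ) < n - (δ + k) := (hE _ hmem).2 w (by simp)
  have hiw : i ≠ w := by
    rintro rfl
    exact hnadj (hZ j (by omega) hij).symm
  have hiwadj := hZ w hw hiw
  have hiwE : s(i, w) ∉ E' := ((hGadj i w).1 hiwadj).2
  have hE1 : ∀ e ∈ insert s(i, w) (E'.erase s(j, w)), IsE1Edge n k δ e := by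
    intro e he
    rcases Finset.mem_insert.1 he with rfl | he
    · refine ⟨((hGadj i w).1 hiwadj).1, ?_⟩
      intro v hv
      rcases Sym2.mem_iff.1 hv with rfl | rfl
      · exact hi2
      · exact hw
    · exact hE e (Finset.mem_of_mem_erase he)
  have hcard' : (insert s(i, w) (E'.erase s(j, w))).card = δ * (δ + k) / 4 + 1 := by
    rw [Finset.card_insert_of_notMem (fun hh => hiwE (Finset.mem_of_mem_erase hh)),
      Finset.card_erase_of_mem hmem, hcard]
    omega
  have hle := hmax _ hE1 hcard'
  refine absurd hle (not_le.2 ?_)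
  refine switch_lt G _ h hpos (qIndex G) heig i j w hij hiw hjw hiwadj hnadj ?_ hcon
  intro a b
  have hne : s(j, w) ≠ s(i, w) := fun hh => hiwE (hh ▸ hmem)
  have hBj : (Bgraph n k δ).Adj j w := ⟨hjw, Or.inl hj⟩
  rw [hGadj, SimpleGraph.deleteEdges_adj]
  simp only [Finset.mem_coe, Finset.mem_insert, Finset.mem_erase]
  by_cases c : s(a, b) = s(j, w)
  · have hB : (Bgraph n k δ).Adj a b := by
      rwa [← SimpleGraph.mem_edgeSet, c, SimpleGraph.mem_edgeSet]
    simp only [c, hne, hB]; tauto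
  · tauto
end

section
/- Let k ≥ 1, δ ≥ 2, n ≥ (δ² + kδ + 7δ + 6k + 9)(δ² + kδ + 1), and let G ∈ 𝓑₂(n,k,δ). Let h be a positive eigenvector of Q(G) for the eigenvalue q(G), and suppose q(G) > 2(n − δ − k − 1) − 1. Set Z₁ = {i ∈ Z : d_G(i) = n−δ−k−1} and Z₂ = {i ∈ Z : d_G(i) ≤ n−δ−k−2}. If Z₂ ≠ ∅, then h_i > h_j for all i ∈ Z₁ and all j ∈ Z₂. -/
open Finset Matrix

/-- **Lemma 3.5 (2)**: for `G ∈ 𝓑₂(n,k,δ)` and a positive `q(G)`-eigenvector `h`, with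
`q(G) > 2(n-δ-k-1) - 1`: if `Z₂ ≠ ∅`, then `h i > h j` for all `i ∈ Z₁` and `j ∈ Z₂`. -/
theorem eigenvector_Z1_gt_Z2 (k δ n : ℕ) (hk : 1 ≤ k) (hδ : 2 ≤ δ)
    (hn : (δ ^ 2 + k * δ + 7 * δ + 6 * k + 9) * (δ ^ 2 + k * δ + 1) ≤ n)
    (E' : Finset (Sym2 (Fin n))) (hE : ∀ e ∈ E', IsE1Edge n k δ e)
    (hcard : E'.card = δ * (δ + k) / 4 + 1)
    (G : SimpleGraph (Fin n)) [DecidableRel G.Adj]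
    (hG : G = (Bgraph n k δ).deleteEdges ↑E')
    (h : Fin n → ℝ) (hpos : ∀ v, 0 < h v)
    (heig : signlessLaplacian G *ᵥ h = qIndex G • h)
    (hq : 2 * ((n : ℝ) - δ - k - 1) - 1 < qIndex G)
    (hZ2 : ∃ j : Fin n, δ ≤ (j : ℕ) ∧ (j : ℕ) < n - (δ + k) ∧
        G.degree j ≤ n - δ - k - 2) :
    ∀ i j : Fin n,
      δ ≤ (i : ℕ) → (i : ℕ) < n - (δ + k) → G.degree i = n - δ - k - 1 →
      δ ≤ (j : ℕ) → (j : ℕ) < n - (δ + k) → G.degree j ≤ n - δ - k - 2 →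
      h j < h i := by
  intro i j hi1 hi2 hdi hj1 hj2 hdj
  have key : ∀ v, (qIndex G - G.degree v + 1) * h v
      = ∑ u ∈ insert v (G.neighborFinset v), h u := by
    intro v
    have e := congrFun heig v
    simp only [signlessLaplacian, Matrix.add_mulVec, Pi.add_apply, Matrix.mulVec_diagonal,
      SimpleGraph.adjMatrix_mulVec_apply, Pi.smul_apply, smul_eq_mul] at e
    rw [Finset.sum_insert (by simp)]
    linarith
  have sub : ∀ v : Fin n, δ ≤ (v : ℕ) → (v : ℕ) < n - (δ + k) →
      insert v (G.neighborFinset v) ⊆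
        Finset.univ.filter (fun u : Fin n => (u : ℕ) < n - (δ + k)) := by
    intro v hv1 hv2 u hu
    rw [Finset.mem_insert, SimpleGraph.mem_neighborFinset] at hu
    rw [Finset.mem_filter]
    refine ⟨Finset.mem_univ _, ?_⟩
    rcases hu with rfl | hu
    · exact hv2
    · rw [hG, SimpleGraph.deleteEdges_adj] at hu
      have h2 := hu.1.2
      omega
  have hcardYZ : (Finset.univ.filter (fun u : Fin n => (u : ℕ) < n - (δ + k))).card
      = n - (δ + k) := by
    rw [Fin.card_filter_val_lt]
    omega
  have hci : (insert i (G.neighborFinset i)).card = n - (δ + k) := by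
    rw [Finset.card_insert_of_notMem (by simp), SimpleGraph.card_neighborFinset_eq_degree, hdi]
    omega
  have hieq := Finset.eq_of_subset_of_card_le (sub i hi1 hi2) (by rw [hcardYZ, hci])
  have hle : (qIndex G - G.degree j + 1) * h j ≤ (qIndex G - G.degree i + 1) * h i := by
    rw [key, key, hieq]
    exact Finset.sum_le_sum_of_subset_of_nonneg (sub j hj1 hj2) (fun u _ _ => (hpos u).le)
  have hd : (G.degree j : ℝ) < G.degree i := by
    have : G.degree j < G.degree i := by omega
    exact_mod_cast this
  have hN : (G.degree i : ℝ) = (n : ℝ) - δ - k - 1 := by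
    have : G.degree i + δ + k + 1 = n := by omega
    have h2 : ((G.degree i + δ + k + 1 : ℕ) : ℝ) = n := by rw [this]
    push_cast at h2
    linarith
  have hd0 : (0 : ℝ) ≤ G.degree j := Nat.cast_nonneg _
  have hp : 0 < qIndex G - G.degree i + 1 := by linarith
  have hj := hpos j
  by_contra hcon
  push Not at hcon
  nlinarith [mul_le_mul_of_nonneg_left hcon hp.le, mul_pos (sub_pos.2 hd) hj]
end

section
/- Let k ≥ 1, δ ≥ 2, n ≥ (δ² + kδ + 7δ + 6k + 9)(δ² + kδ + 1), and let G ∈ 𝓑₂(n,k,δ). Let h be a positive eigenvector of Q(G) for the eigenvalue q(G), and suppose q(G) > 2(n − δ − k − 1) − 1. Set Y₁ = {i ∈ Y : d_G(i) = n−1} and Z₁ = {i ∈ Z : d_G(i) = n−δ−k−1}. If Y₁ ≠ ∅, then h_i > h_j for all i ∈ Y₁ and all j ∈ Z₁. -/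
open Finset Matrix

/-- **Lemma 3.5 (3)**: for `G ∈ 𝓑₂(n,k,δ)` and a positive `q(G)`-eigenvector `h`, with
`q(G) > 2(n-δ-k-1) - 1`: if `Y₁ ≠ ∅`, then `h i > h j` for all `i ∈ Y₁` and `j ∈ Z₁`. -/
theorem eigenvector_Y1_gt_Z1 (k δ n : ℕ) (hk : 1 ≤ k) (hδ : 2 ≤ δ)
    (hn : (δ ^ 2 + k * δ + 7 * δ + 6 * k + 9) * (δ ^ 2 + k * δ + 1) ≤ n)
    (E' : Finset (Sym2 (Fin n))) (hE : ∀ e ∈ E', IsE1Edge n k δ e)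
    (hcard : E'.card = δ * (δ + k) / 4 + 1)
    (G : SimpleGraph (Fin n)) [DecidableRel G.Adj]
    (hG : G = (Bgraph n k δ).deleteEdges ↑E')
    (h : Fin n → ℝ) (hpos : ∀ v, 0 < h v)
    (heig : signlessLaplacian G *ᵥ h = qIndex G • h)
    (hq : 2 * ((n : ℝ) - δ - k - 1) - 1 < qIndex G)
    (hY1 : ∃ i : Fin n, (i : ℕ) < δ ∧ G.degree i = n - 1) :
    ∀ i j : Fin n,
      (i : ℕ) < δ → G.degree i = n - 1 →
      δ ≤ (j : ℕ) → (j : ℕ) < n - (δ + k) → G.degree j = n - δ - k - 1 →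
      h j < h i := by
  intro i j hi hdi hj hj' hdj
  have key : ∀ v, (G.degree v : ℝ) * h v + ∑ u ∈ G.neighborFinset v, h u = qIndex G * h v := by
    intro v
    have := congrFun heig v
    simpa [signlessLaplacian, Matrix.add_mulVec, Matrix.mulVec_diagonal,
      SimpleGraph.adjMatrix_mulVec_apply] using this
  have hsub : ∀ v, G.neighborFinset v ⊆ Finset.univ.erase v := by
    intro v u hu
    have hadj : G.Adj v u := by simpa using hu
    simp [hadj.ne']
  have hS : ∀ v, ∑ u ∈ Finset.univ.erase v, h u + h v = ∑ u, h u := fun v =>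
    Finset.sum_erase_add _ _ (Finset.mem_univ v)
  have hNi : G.neighborFinset i = Finset.univ.erase i := by
    apply Finset.eq_of_subset_of_card_le (hsub i)
    rw [SimpleGraph.card_neighborFinset_eq_degree, hdi]
    simp
  have hNj : ∑ u ∈ G.neighborFinset j, h u ≤ ∑ u ∈ Finset.univ.erase j, h u :=
    Finset.sum_le_sum_of_subset_of_nonneg (hsub j) (fun u _ _ => (hpos u).le)
  have hSpos : 0 < ∑ u, h u := Finset.sum_pos (fun u _ => hpos u) ⟨i, Finset.mem_univ i⟩
  have ki := key i
  have kj := key j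
  rw [hNi] at ki
  have hlt : (G.degree j : ℝ) + 1 ≤ G.degree i := by
    have : G.degree j + 1 ≤ G.degree i := by omega
    exact_mod_cast this
  have si := hS i
  have sj := hS j
  have hpi := hpos i
  have hpj := hpos j
  have e1 : (qIndex G - G.degree i + 1) * h i = ∑ u, h u := by linarith
  have e2 : (qIndex G - G.degree j + 1) * h j ≤ ∑ u, h u := by linarith
  have hc : 0 < qIndex G - G.degree i + 1 := by
    by_contra hcon
    nlinarith
  by_contra hcon
  push Not at hcon
  nlinarith
end

section
/- Let k ≥ 1, δ ≥ 2, n ≥ (δ² + kδ + 7δ + 6k + 9)(δ² + kδ + 1), and let G ∈ 𝓑₂(n,k,δ) be a graph attaining the maximum Q-index among all graphs in 𝓑₂(n,k,δ), and, subject to that, such that the induced subgraph G[Y] has the largest number of edges. Let h be a positive eigenvector of Q(G) for q(G), normalized so that its maximum entry equals 1, and suppose q(G) > n − 1. Then max_{i ∈ V(G)} h_i − min_{j ∈ Y ∪ Z} h_j < ((δ+k)(δ+4) + 4)/(2(q(G) − n + 1)). -/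
open Finset Matrix

/-- Rewriting of the eigen-equation through the non-neighbours of `v`. -/
lemma eig_row {n : ℕ} (G : SimpleGraph (Fin n)) [DecidableRel G.Adj] (h : Fin n → ℝ) (q : ℝ)
    (heig : signlessLaplacian G *ᵥ h = q • h) (v : Fin n) :
    (q - n + 2) * h v = ∑ u, h u -
      ∑ u ∈ univ.filter (fun u => u ≠ v ∧ ¬ G.Adj v u), (h u + h v) := by
  have h1 : (G.degree v : ℝ) * h v + ∑ u ∈ G.neighborFinset v, h u = q * h v := by
    have := congrFun heig v
    simpa [signlessLaplacian, Matrix.add_mulVec, Matrix.mulVec_diagonal,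
      SimpleGraph.adjMatrix_mulVec_apply] using this
  have h2 : (G.degree v : ℝ) * h v + ∑ u ∈ G.neighborFinset v, h u
      = ∑ u ∈ univ.filter (fun u => G.Adj v u), (h u + h v) := by
    rw [← SimpleGraph.neighborFinset_eq_filter, Finset.sum_add_distrib, Finset.sum_const,
      SimpleGraph.card_neighborFinset_eq_degree, nsmul_eq_mul]
    ring
  have h3 : ∑ u, (h u + h v) = ∑ u, h u + n * h v := by
    simp [Finset.sum_add_distrib]
  have h4 := Finset.sum_filter_add_sum_filter_not univ (fun u => G.Adj v u)
    (fun u => h u + h v)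
  have h5 : univ.filter (fun u => ¬ G.Adj v u)
      = insert v (univ.filter (fun u => u ≠ v ∧ ¬ G.Adj v u)) := by
    ext u
    by_cases huv : u = v
    · subst huv; simp
    · simp [huv]
  rw [h5, Finset.sum_insert (by simp)] at h4
  linarith

/-- Counting the non-neighbours of a vertex of `Y ∪ Z`. -/
lemma card_nonnbr (k δ n : ℕ) (E' : Finset (Sym2 (Fin n)))
    (G : SimpleGraph (Fin n)) [DecidableRel G.Adj]
    (hG : G = (Bgraph n k δ).deleteEdges ↑E') (j : Fin n) (hj : (j : ℕ) < n - (δ + k)) :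
    (univ.filter (fun u => u ≠ j ∧ ¬ G.Adj j u)).card ≤ (δ + k) + E'.card := by
  have hsub : univ.filter (fun u => u ≠ j ∧ ¬ G.Adj j u) ⊆
      univ.filter (fun u : Fin n => n - (δ + k) ≤ (u : ℕ)) ∪
      univ.filter (fun u : Fin n => s(j, u) ∈ E') := by
    intro u hu
    simp only [hG, mem_filter, mem_univ, true_and, mem_union, SimpleGraph.deleteEdges_adj,
      Bgraph, Finset.mem_coe] at hu ⊢
    by_contra hc
    push Not at hc
    exact hu.2 ⟨⟨hu.1.symm, Or.inr (Or.inr ⟨hj, hc.1⟩)⟩, hc.2⟩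
  have hX : (univ.filter (fun u : Fin n => n - (δ + k) ≤ (u : ℕ))).card ≤ δ + k := by
    calc _ ≤ (Finset.Ico (n - (δ + k)) n).card := by
          apply Finset.card_le_card_of_injOn (fun u : Fin n => (u : ℕ))
          · intro u hu
            simp at hu ⊢
            omega
          · intro a _ b _ hab
            exact Fin.ext hab
      _ ≤ δ + k := by simp; omega
  have hE : (univ.filter (fun u : Fin n => s(j, u) ∈ E')).card ≤ E'.card := by
    apply Finset.card_le_card_of_injOn (fun u : Fin n => s(j, u))
    · intro u hu
      simpa using hu
    · intro a _ b _ hab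
      exact Sym2.congr_right.mp hab
  exact (Finset.card_le_card hsub).trans ((Finset.card_union_le _ _).trans (add_le_add hX hE))

/-- **Lemma 3.6**: with `G` extremal in `𝓑₂(n,k,δ)` as before and `h` a positive
`q(G)`-eigenvector with maximum entry `1`, the gap between the largest entry of `h` and the
smallest entry of `h` over `Y ∪ Z` is less than `((δ+k)(δ+4)+4)/(2(q(G)-n+1))`
(stated as: `h i - h j` is below this bound for every vertex `i` and every `j ∈ Y ∪ Z`). -/
theorem eigenvector_gap (k δ n : ℕ) (hk : 1 ≤ k) (hδ : 2 ≤ δ)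
    (hn : (δ ^ 2 + k * δ + 7 * δ + 6 * k + 9) * (δ ^ 2 + k * δ + 1) ≤ n)
    (E' : Finset (Sym2 (Fin n))) (hE : ∀ e ∈ E', IsE1Edge n k δ e)
    (hcard : E'.card = δ * (δ + k) / 4 + 1)
    (G : SimpleGraph (Fin n)) [DecidableRel G.Adj]
    (hG : G = (Bgraph n k δ).deleteEdges ↑E')
    (hmax : ∀ E'' : Finset (Sym2 (Fin n)), (∀ e ∈ E'', IsE1Edge n k δ e) →
        E''.card = δ * (δ + k) / 4 + 1 →
        qIndex ((Bgraph n k δ).deleteEdges ↑E'') ≤ qIndex G)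
    (hmaxY : ∀ E'' : Finset (Sym2 (Fin n)), (∀ e ∈ E'', IsE1Edge n k δ e) →
        E''.card = δ * (δ + k) / 4 + 1 →
        qIndex ((Bgraph n k δ).deleteEdges ↑E'') = qIndex G →
        inducedYEdges n δ ((Bgraph n k δ).deleteEdges ↑E'') ≤ inducedYEdges n δ G)
    (h : Fin n → ℝ) (hpos : ∀ v, 0 < h v)
    (heig : signlessLaplacian G *ᵥ h = qIndex G • h)
    (hnorm : (∀ v, h v ≤ 1) ∧ ∃ v, h v = 1)
    (hq : (n : ℝ) - 1 < qIndex G) :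
    ∀ i j : Fin n, (j : ℕ) < n - (δ + k) →
      h i - h j < (((δ : ℝ) + k) * ((δ : ℝ) + 4) + 4) / (2 * (qIndex G - n + 1)) := by
  intro i j hj
  have ri := eig_row G h _ heig i
  have rj := eig_row G h _ heig j
  have hc := card_nonnbr k δ n E' G hG j hj
  set q := qIndex G
  set N := univ.filter (fun u => u ≠ j ∧ ¬ G.Adj j u)
  have hi : 0 ≤ ∑ u ∈ univ.filter (fun u => u ≠ i ∧ ¬ G.Adj i u), (h u + h i) :=
    Finset.sum_nonneg (fun u _ => (add_pos (hpos u) (hpos i)).le)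
  have hN : ∑ u ∈ N, (h u + h j) ≤ N.card * 2 := by
    rw [← nsmul_eq_mul]
    apply Finset.sum_le_card_nsmul
    intro u _
    linarith [hnorm.1 u, hnorm.1 j]
  have hc2 : 4 * N.card ≤ 4 * (δ + k) + δ * (δ + k) + 4 := by omega
  have hc3 : 4 * (N.card : ℝ) ≤ 4 * (δ + k) + δ * (δ + k) + 4 := by exact_mod_cast hc2
  have hC : (0 : ℝ) < ((δ : ℝ) + k) * ((δ : ℝ) + 4) + 4 := by positivity
  have hq' : 0 < q - n + 1 := by linarith
  rw [lt_div_iff₀ (by linarith)]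
  rcases le_or_gt (h i - h j) 0 with hle | hgt
  · nlinarith
  · nlinarith
end
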